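/- Let 0 < p < 1/2. There exists a constant c_p such that for every martingale F ∈ H_p(G) and every n ≥ 1, ‖σ_n F‖_{H_p} ≤ c_p 2^{d(n)(1/p − 2)} ‖F‖_{H_p}, where d(n) = |n| − [n] with |n| and [n] the highest and lowest nonzero binary digit positions of n. -/

import Mathlib

open MeasureTheory Filter Topology ENNReal NNReal

noncomputable section

/-- The dyadic group `G = (ℤ/2)^ℕ`. -/
abbrev G : Type := ℕ → ZMod 2

instance : TopologicalSpace (ZMod 2) := ⊥
instance : DiscreteTopology (ZMod 2) := ⟨rfl⟩
instance : MeasurableSpace G := borel G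
instance : BorelSpace G := ⟨rfl⟩

/-- Normalized Haar measure on `G`. -/
def μG : Measure G := Measure.addHaarMeasure ⟨⟨Set.univ, isCompact_univ⟩, by simp⟩

/-- Cylinder `I_n(x) = {y : y_0 = x_0, ..., y_{n-1} = x_{n-1}}`. -/
def cyl (n : ℕ) (x : G) : Set G := {y | ∀ k < n, y k = x k}

/-- `I_n = I_n(0)`. -/
def I₀ (n : ℕ) : Set G := cyl n 0

/-- `e t`: the element of `G` with a single 1 in coordinate `t`. -/
def e (t : ℕ) : G := fun k => if k = t then 1 else 0

/-- Rademacher functions `r_k(x) = (-1)^{x_k}`. -/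
def rade (k : ℕ) (x : G) : ℝ := (-1 : ℝ) ^ (x k).val

/-- Walsh functions `w_n = ∏ r_k^{n_k}` (binary digits `n_k` of `n`). -/
def walsh (n : ℕ) (x : G) : ℝ :=
  ∏ k ∈ Finset.range (n + 1), if n.testBit k then rade k x else 1

/-- Walsh–Dirichlet kernel `D_n = ∑_{k<n} w_k`. -/
def D (n : ℕ) (x : G) : ℝ := ∑ k ∈ Finset.range n, walsh k x

/-- Walsh–Fejér kernel `K_n = (1/n) ∑_{k=1}^n D_k`. -/
def K (n : ℕ) (x : G) : ℝ := (1 / n) * ∑ k ∈ Finset.Icc 1 n, D k x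

/-- Binary variation `V(n) = n_0 + ∑_{k≥1} |n_k - n_{k-1}|`. -/
def V (n : ℕ) : ℕ :=
  (if n.testBit 0 then 1 else 0) +
    ∑ k ∈ Finset.Icc 1 (n + 1), if n.testBit k ≠ n.testBit (k - 1) then 1 else 0

/-- `|n|`: index of the highest nonzero binary digit of `n`. -/
def hi (n : ℕ) : ℕ := Nat.log 2 n

/-- `[n]`: index of the lowest nonzero binary digit of `n`. -/
def lo (n : ℕ) : ℕ := padicValNat 2 n

/-- `d(n) = |n| - [n]`. -/
def dd (n : ℕ) : ℕ := hi n - lo n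

/-- A dyadic martingale: `F n` depends only on the first `n` coordinates, and
`F n` is the average of the two possible extensions, i.e. the martingale property
with respect to the dyadic filtration. -/
def IsDyadicMartingale (F : ℕ → G → ℝ) : Prop :=
  (∀ n x y, (∀ k < n, x k = y k) → F n x = F n y) ∧
  (∀ n x, F n x = (F (n+1) x + F (n+1) (Function.update x n (x n + 1))) / 2)

/-- `k`-th Walsh–Fourier coefficient of a martingale,
`F̂(k) = lim_n ∫ F_n w_k dμ` (the integrals are eventually constant). -/
def mcoeff (F : ℕ → G → ℝ) (k : ℕ) : ℝ := ∫ x, F (k+1) x * walsh k x ∂μG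

/-- Partial sums `S_m F` of the Walsh–Fourier series of a martingale. -/
def S (F : ℕ → G → ℝ) (m : ℕ) (x : G) : ℝ := ∑ j ∈ Finset.range m, mcoeff F j * walsh j x

/-- Fejér means `σ_n F = (1/n) ∑_{k=1}^n S_k F`. -/
def σ (F : ℕ → G → ℝ) (n : ℕ) (x : G) : ℝ := (1 / n) * ∑ k ∈ Finset.Icc 1 n, S F k x

/-- `H_p` quasi-norm of a martingale: `‖sup_n |F_n|‖_{L_p}`. -/
def HpNorm (p : ℝ) (F : ℕ → G → ℝ) : ℝ≥0∞ :=
  (∫⁻ x, (⨆ n, (‖F n x‖₊ : ℝ≥0∞)) ^ p ∂μG) ^ (1 / p)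

/-- Membership in the martingale Hardy space `H_p(G)`. -/
def MemHp (p : ℝ) (F : ℕ → G → ℝ) : Prop := IsDyadicMartingale F ∧ HpNorm p F < ⊤

/-- `L_p` quasi-norm of a function on `G`. -/
def LpN (p : ℝ) (f : G → ℝ) : ℝ≥0∞ := (∫⁻ x, (‖f x‖₊ : ℝ≥0∞) ^ p ∂μG) ^ (1 / p)

/-- Weak `L_p` quasi-norm: `‖f‖_{L_{p,∞}} = sup_{λ>0} λ μ(|f|>λ)^{1/p}`. -/
def wLp (p : ℝ) (f : G → ℝ) : ℝ≥0∞ :=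
  ⨆ t : ℝ≥0, (t : ℝ≥0∞) * (μG {x | (t : ℝ) < |f x|}) ^ (1 / p)

/-- Walsh–Fourier coefficient of an integrable function. -/
def fcoeff (f : G → ℝ) (j : ℕ) : ℝ := ∫ x, f x * walsh j x ∂μG

/-- Partial sums of the Walsh–Fourier series of a function. -/
def Sf (f : G → ℝ) (m : ℕ) (x : G) : ℝ := ∑ j ∈ Finset.range m, fcoeff f j * walsh j x

/-- Fejér means of the Walsh–Fourier series of a function. -/
def σf (f : G → ℝ) (n : ℕ) (x : G) : ℝ := (1 / n) * ∑ k ∈ Finset.Icc 1 n, Sf f k x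

/-- The martingale `(S_{2^m} g)_m` generated by a function `g`; used to interpret the
`H_p` norm of a function such as `σ_n F`. -/
def funMart (g : G → ℝ) : ℕ → G → ℝ := fun m => Sf g (2 ^ m)

/-- Modulus of continuity in `H_p`: `ω_{H_p}(1/2^n, F) = ‖F - S_{2^n} F‖_{H_p}`,
where `F - S_{2^n}F` is the martingale with `m`-th term `F_m - S_{min(2^n, 2^m)}F`. -/
def ωHp (p : ℝ) (n : ℕ) (F : ℕ → G → ℝ) : ℝ≥0∞ :=
  HpNorm p (fun m x => F m x - S F (min (2 ^ n) (2 ^ m)) x)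

/-- The a.e. limit of a martingale (as a limsup, which agrees a.e. with the limit
for martingales in `H_p`). -/
def mLim (F : ℕ → G → ℝ) (x : G) : ℝ := Filter.limsup (fun m => F m x) Filter.atTop

/-- The set `E_l := I_{l+1}(e_{l-1} + e_l)`, with the convention
`I_1(e_{-1}+e_0) = I_2(e_0+e_1)` for `l = 0`. -/
def Eset (l : ℕ) : Set G :=
  if l = 0 then cyl 2 (e 0 + e 1) else cyl (l + 1) (e (l - 1) + e l)

/-! ### Walsh functions -/

theorem walsh_eq_prod {n M : ℕ} (h : n < 2 ^ M) (x : G) :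
    walsh n x = ∏ k ∈ Finset.range M, if n.testBit k then rade k x else 1 := by
  have key : ∀ M, n < 2 ^ M → ∀ M', M ≤ M' →
      ∏ k ∈ Finset.range M', (if n.testBit k then rade k x else 1) =
        ∏ k ∈ Finset.range M, if n.testBit k then rade k x else 1 := by
    intro M hM M' hle
    refine (Finset.prod_subset (Finset.range_mono hle) fun k _ hk => ?_).symm
    rw [Finset.mem_range, not_lt] at hk
    rw [Nat.testBit_lt_two_pow (hM.trans_le (Nat.pow_le_pow_right two_pos hk))]
    rfl
  have hn : n < 2 ^ (n + 1) := n.lt_two_pow_self.trans (Nat.pow_lt_pow_right one_lt_two n.lt_succ_self)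
  rw [walsh, ← key _ hn _ (le_max_left (n + 1) M), ← key _ h _ (le_max_right (n + 1) M)]

theorem rade_mul_self (k : ℕ) (x : G) : rade k x * rade k x = 1 := by
  rw [rade, ← mul_pow]; norm_num

theorem rade_add_e (k t : ℕ) (x : G) :
    rade k (x + e t) = (if k = t then -1 else 1) * rade k x := by
  by_cases h : k = t
  · subst h
    simp only [rade, e, Pi.add_apply, if_true]
    generalize x k = y
    rcases (by decide : ∀ y : ZMod 2, y = 0 ∨ y = 1) y with rfl | rfl
    · simp [ZMod.val_one]
    · simp [ZMod.val_one, show (1 + 1 : ZMod 2) = 0 from rfl]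
  · simp [rade, e, h]

theorem continuous_rade (k : ℕ) : Continuous (rade k) :=
  (continuous_of_discreteTopology (f := fun y : ZMod 2 => (-1 : ℝ) ^ y.val)).comp
    (continuous_apply k)

theorem continuous_walsh (n : ℕ) : Continuous (walsh n) := by
  refine continuous_finsetProd _ fun k _ => ?_
  split_ifs
  · exact continuous_rade k
  · exact continuous_const

theorem walsh_mul_self (n : ℕ) (x : G) : walsh n x * walsh n x = 1 := by
  rw [walsh, ← Finset.prod_mul_distrib]
  refine Finset.prod_eq_one fun k _ => ?_
  split_ifs
  · exact rade_mul_self k x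
  · exact one_mul 1

theorem walsh_add_e (n t : ℕ) (x : G) :
    walsh n (x + e t) = (if n.testBit t then -1 else 1) * walsh n x := by
  have h : n < 2 ^ (n + t + 1) :=
    n.lt_two_pow_self.trans (Nat.pow_lt_pow_right one_lt_two (by omega))
  have ht : t ∈ Finset.range (n + t + 1) := Finset.mem_range.2 (by omega)
  rw [walsh_eq_prod h, walsh_eq_prod h, ← Finset.mul_prod_erase _ _ ht,
    ← Finset.mul_prod_erase _ _ ht, ← mul_assoc]
  congr 1
  · split_ifs
    · simp [rade_add_e]
    · simp
  · refine Finset.prod_congr rfl fun k hk => ?_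
    rw [rade_add_e, if_neg (Finset.ne_of_mem_erase hk), one_mul]

theorem walsh_two_pow_add {m j : ℕ} (h : j < 2 ^ m) (x : G) :
    walsh (2 ^ m + j) x = rade m x * walsh j x := by
  have h' : 2 ^ m + j < 2 ^ (m + 1) := by rw [pow_succ]; omega
  rw [walsh_eq_prod h', walsh_eq_prod h, Finset.prod_range_succ, mul_comm]
  congr 1
  · rw [Nat.testBit_two_pow_add_eq, Nat.testBit_lt_two_pow h]; rfl
  · refine Finset.prod_congr rfl fun k hk => ?_
    rw [Nat.testBit_two_pow_add_gt (Finset.mem_range.1 hk)]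

instance : IsProbabilityMeasure μG := ⟨Measure.addHaarMeasure_self⟩

instance : μG.IsAddHaarMeasure := by unfold μG; infer_instance

theorem integrable_of_continuous {f : G → ℝ} (hf : Continuous f) : Integrable f μG :=
  hf.integrable_of_hasCompactSupport (HasCompactSupport.of_compactSpace f)

theorem integral_walsh_mul_walsh (i j : ℕ) :
    ∫ x, walsh i x * walsh j x ∂μG = if i = j then 1 else 0 := by
  split_ifs with h
  · subst h
    simp [walsh_mul_self]
  · obtain ⟨t, ht⟩ : ∃ t, i.testBit t ≠ j.testBit t := by
      by_contra! hc
      exact h (Nat.eq_of_testBit_eq hc)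
    have h1 := integral_add_right_eq_self (μ := μG) (fun x => walsh i x * walsh j x) (e t)
    have h2 : ∀ x, walsh i (x + e t) * walsh j (x + e t) = -(walsh i x * walsh j x) := by
      intro x
      rw [walsh_add_e, walsh_add_e]
      revert ht
      cases i.testBit t <;> cases j.testBit t <;> simp
    simp only [h2, integral_neg] at h1
    linarith

theorem fcoeff_sum_walsh (s : Finset ℕ) (c : ℕ → ℝ) (j : ℕ) :
    fcoeff (fun x => ∑ i ∈ s, c i * walsh i x) j = if j ∈ s then c j else 0 := by
  simp only [fcoeff, Finset.sum_mul, mul_assoc]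
  rw [integral_finsetSum]
  · simp [integral_const_mul, integral_walsh_mul_walsh]
  · intro i _
    exact integrable_of_continuous
      (continuous_const.mul ((continuous_walsh i).mul (continuous_walsh j)))

theorem add_e_eq_update (m : ℕ) (x : G) : x + e m = Function.update x m (x m + 1) := by
  ext k
  by_cases h : k = m
  · subst h; simp [e]
  · simp [e, h]

/-- A function of the first `m` coordinates is a Walsh polynomial of degree less than `2 ^ m`. -/
theorem exists_eq_sum_walsh (m : ℕ) (f : G → ℝ) (hf : ∀ x y : G, (∀ k < m, x k = y k) → f x = f y) :
    ∃ c : ℕ → ℝ, ∀ x, f x = ∑ j ∈ Finset.range (2 ^ m), c j * walsh j x := by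
  induction m generalizing f with
  | zero =>
    refine ⟨fun _ => f 0, fun x => ?_⟩
    simpa [walsh] using hf x 0 (by simp)
  | succ m ih =>
    have two : ∀ y : ZMod 2, y + 1 + 1 = y := by decide
    have hshift : ∀ x, f (x + e m + e m) = f x := fun x => by
      congr 1
      ext k
      by_cases h : k = m <;> simp [e, h, two]
    have hdep : ∀ g : G → ℝ, (∀ x y : G, (∀ k < m + 1, x k = y k) → g x = g y) →
        (∀ x, g (x + e m) = g x) → ∀ x y : G, (∀ k < m, x k = y k) → g x = g y := by
      intro g hg hinv x y hxy
      have zz : ∀ a b : ZMod 2, a = b ∨ a + 1 = b := by decide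
      rcases zz (x m) (y m) with h | h
      · refine hg x y fun k hk => ?_
        rcases Nat.lt_succ_iff_lt_or_eq.1 hk with hk | rfl
        exacts [hxy k hk, h]
      · rw [← hinv x]
        refine hg _ y fun k hk => ?_
        rcases Nat.lt_succ_iff_lt_or_eq.1 hk with hk | rfl
        · simp [e, hk.ne, hxy k hk]
        · simpa [e] using h
    have hfe : ∀ x y : G, (∀ k < m + 1, x k = y k) → f (x + e m) = f (y + e m) :=
      fun x y hxy => hf _ _ fun k hk => by simp [hxy k hk]
    obtain ⟨a, ha⟩ := ih (fun x => (f x + f (x + e m)) / 2) (hdep _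
      (fun x y hxy => by simp only [hf x y hxy, hfe x y hxy])
      (fun x => by simp only [hshift]; ring))
    obtain ⟨b, hb⟩ := ih (fun x => rade m x * ((f x - f (x + e m)) / 2)) (hdep _
      (fun x y hxy => by
        simp only [hf x y hxy, hfe x y hxy, rade, hxy m m.lt_succ_self])
      (fun x => by simp only [hshift, rade_add_e, if_true]; ring))
    refine ⟨fun j => if j < 2 ^ m then a j else b (j - 2 ^ m), fun x => ?_⟩
    rw [pow_succ, mul_two, Finset.sum_range_add]
    have e1 : ∑ j ∈ Finset.range (2 ^ m), (if j < 2 ^ m then a j else b (j - 2 ^ m)) * walsh j x =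
        (f x + f (x + e m)) / 2 := by
      rw [ha x]
      exact Finset.sum_congr rfl fun j hj => by rw [if_pos (Finset.mem_range.1 hj)]
    have e2 : ∑ j ∈ Finset.range (2 ^ m), (if 2 ^ m + j < 2 ^ m then a (2 ^ m + j)
        else b (2 ^ m + j - 2 ^ m)) * walsh (2 ^ m + j) x = (f x - f (x + e m)) / 2 := by
      rw [← one_mul ((f x - f (x + e m)) / 2), ← rade_mul_self m x, mul_assoc, hb x,
        Finset.mul_sum]
      refine Finset.sum_congr rfl fun j hj => ?_
      rw [walsh_two_pow_add (Finset.mem_range.1 hj), if_neg (by omega), Nat.add_sub_cancel_left]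
      ring
    rw [e1, e2]
    ring

theorem IsDyadicMartingale.eq_sum_fcoeff {F : ℕ → G → ℝ} (hF : IsDyadicMartingale F) (m : ℕ)
    (x : G) : F m x = ∑ j ∈ Finset.range (2 ^ m), fcoeff (F m) j * walsh j x := by
  obtain ⟨c, hc⟩ := exists_eq_sum_walsh m (F m) (hF.1 m)
  rw [hc x, show F m = _ from funext hc]
  refine Finset.sum_congr rfl fun j hj => ?_
  rw [fcoeff_sum_walsh, if_pos hj]

theorem IsDyadicMartingale.fcoeff_eq_fcoeff {F : ℕ → G → ℝ} (hF : IsDyadicMartingale F)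
    {j m : ℕ} (hj : j < 2 ^ m) (i : ℕ) : fcoeff (F (m + i)) j = fcoeff (F m) j := by
  induction i with
  | zero => rfl
  | succ i ih =>
    rw [← ih, ← add_assoc]
    generalize hk : m + i = k
    have hjk : j < 2 ^ k := hj.trans_le (Nat.pow_le_pow_right two_pos (by omega))
    have h : F k = fun x => ∑ j ∈ Finset.range (2 ^ k), fcoeff (F (k + 1)) j * walsh j x := by
      ext x
      rw [hF.2 k x, ← add_e_eq_update, hF.eq_sum_fcoeff (k + 1) x,
        hF.eq_sum_fcoeff (k + 1) (x + e k), ← Finset.sum_add_distrib, pow_succ, mul_two,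
        Finset.sum_range_add, add_div, Finset.sum_div, Finset.sum_div]
      have e2 : ∑ j ∈ Finset.range (2 ^ k), (fcoeff (F (k + 1)) (2 ^ k + j) * walsh (2 ^ k + j) x +
          fcoeff (F (k + 1)) (2 ^ k + j) * walsh (2 ^ k + j) (x + e k)) / 2 = 0 := by
        refine Finset.sum_eq_zero fun j hj => ?_
        rw [walsh_add_e, Nat.testBit_two_pow_add_eq,
          Nat.testBit_lt_two_pow (Finset.mem_range.1 hj)]
        simp
      rw [e2, add_zero]
      refine Finset.sum_congr rfl fun j hj => ?_
      rw [walsh_add_e, Nat.testBit_lt_two_pow (Finset.mem_range.1 hj)]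
      simp
    conv_rhs => rw [h]
    rw [fcoeff_sum_walsh, if_pos (Finset.mem_range.2 hjk)]

theorem IsDyadicMartingale.eq_sum_mcoeff {F : ℕ → G → ℝ} (hF : IsDyadicMartingale F) (m : ℕ)
    (x : G) : F m x = ∑ j ∈ Finset.range (2 ^ m), mcoeff F j * walsh j x := by
  rw [hF.eq_sum_fcoeff]
  refine Finset.sum_congr rfl fun j hj => ?_
  have h1 := hF.fcoeff_eq_fcoeff (Finset.mem_range.1 hj) (j + 1)
  have h2 := hF.fcoeff_eq_fcoeff
    (j.lt_two_pow_self.trans (Nat.pow_lt_pow_right one_lt_two j.lt_succ_self)) m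
  rw [add_comm] at h2
  rw [← h1, h2]
  rfl

/-! ### The `p`-th power integral -/

/-- `∫ |f|^p`, the `p`-th power of the `L_p` quasi-norm. -/
def powInt (p : ℝ) (f : G → ℝ) : ℝ≥0∞ := ∫⁻ x, ‖f x‖ₑ ^ p ∂μG

theorem Continuous.measurable_enorm_rpow {f : G → ℝ} (hf : Continuous f) (p : ℝ) :
    Measurable fun x => ‖f x‖ₑ ^ p :=
  (hf.measurable.enorm).pow_const p

section powInt

variable {p : ℝ}

theorem enorm_add_rpow_le (hp : 0 < p) (hp1 : p ≤ 1) (a b : ℝ) :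
    ‖a + b‖ₑ ^ p ≤ ‖a‖ₑ ^ p + ‖b‖ₑ ^ p :=
  (ENNReal.rpow_le_rpow (enorm_add_le a b) hp.le).trans (ENNReal.rpow_add_le_add_rpow _ _ hp.le hp1)

theorem powInt_add_le (hp : 0 < p) (hp1 : p ≤ 1) {f : G → ℝ} (hf : Continuous f) (g : G → ℝ) :
    powInt p (fun x => f x + g x) ≤ powInt p f + powInt p g := by
  rw [powInt, powInt, powInt, ← lintegral_add_left (hf.measurable_enorm_rpow p)]
  exact lintegral_mono fun x => enorm_add_rpow_le hp hp1 _ _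

theorem powInt_sum_le (hp : 0 < p) (hp1 : p ≤ 1) {ι : Type*} (s : Finset ι) (f : ι → G → ℝ)
    (hf : ∀ i, Continuous (f i)) :
    powInt p (fun x => ∑ i ∈ s, f i x) ≤ ∑ i ∈ s, powInt p (f i) := by
  classical
  induction s using Finset.induction_on with
  | empty => simp [powInt, hp]
  | insert i s hi ih =>
    simp only [Finset.sum_insert hi]
    exact (powInt_add_le hp hp1 (hf i) _).trans (by gcongr)

theorem powInt_const_mul (hp : 0 < p) (c : ℝ) {f : G → ℝ} (hf : Continuous f) :
    powInt p (fun x => c * f x) = ‖c‖ₑ ^ p * powInt p f := by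
  rw [powInt, powInt, ← lintegral_const_mul _ (hf.measurable_enorm_rpow p)]
  simp only [enorm_mul, ENNReal.mul_rpow_of_nonneg _ _ hp.le]

theorem powInt_translate (f : G → ℝ) (y : G) : powInt p (fun x => f (x + y)) = powInt p f :=
  lintegral_add_right_eq_self (μ := μG) (fun x => ‖f x‖ₑ ^ p) y

theorem enorm_rpow_le_of_le_two_pow (hp : 0 < p) {c : ℝ} {k : ℕ} (h0 : 0 ≤ c) (hc : c ≤ 2 ^ k) :
    ‖c‖ₑ ^ p ≤ ((2 : ℝ≥0∞) ^ p) ^ k := by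
  have h : ‖c‖ₑ ≤ (2 : ℝ≥0∞) ^ k := by
    rw [Real.enorm_of_nonneg h0]
    refine (ENNReal.ofReal_le_ofReal hc).trans ?_
    rw [ENNReal.ofReal_pow zero_le_two, ENNReal.ofReal_ofNat]
  refine (ENNReal.rpow_le_rpow h hp.le).trans_eq ?_
  rw [← ENNReal.rpow_natCast, ← ENNReal.rpow_natCast, ← ENNReal.rpow_mul, ← ENNReal.rpow_mul,
    mul_comm]

theorem enorm_half_rpow_mul_two : ‖(1 / 2 : ℝ)‖ₑ ^ p * 2 = (2 : ℝ≥0∞) ^ (1 - p) := by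
  have h : ‖(1 / 2 : ℝ)‖ₑ = (2 : ℝ≥0∞)⁻¹ := by
    rw [Real.enorm_of_nonneg (by norm_num), one_div, ENNReal.ofReal_inv_of_pos two_pos,
      ENNReal.ofReal_ofNat]
  rw [h, ENNReal.inv_rpow, ← ENNReal.rpow_neg, sub_eq_neg_add,
    ENNReal.rpow_add _ _ two_ne_zero ofNat_ne_top, ENNReal.rpow_one]

theorem powInt_half_le (hp : 0 < p) (hp1 : p ≤ 1) {f : G → ℝ} (hf : Continuous f) (y : G) {ε : ℝ}
    (hε : ε = 1 ∨ ε = -1) :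
    powInt p (fun x => 1 / 2 * (f x + ε * f (x + y))) ≤ 2 ^ (1 - p) * powInt p f := by
  have hfy : Continuous fun x => f (x + y) := hf.comp (continuous_add_const y)
  rw [powInt_const_mul hp _ (f := fun x => f x + ε * f (x + y))
    (hf.add (continuous_const.mul hfy)), ← enorm_half_rpow_mul_two,
    mul_assoc, two_mul]
  gcongr
  refine (powInt_add_le hp hp1 hf _).trans ?_
  rw [powInt_const_mul hp _ hfy, powInt_translate]
  rcases hε with rfl | rfl <;> simp

end powInt

theorem exists_sum_pow_le {r : ℝ≥0∞} (hr : 1 < r) (hr' : r ≠ ⊤) :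
    ∃ C : ℝ≥0, ∀ k, ∑ t ∈ Finset.range k, r ^ t ≤ C * r ^ k := by
  lift r to ℝ≥0 using hr'
  have hr1 : 1 < r := by exact_mod_cast hr
  refine ⟨(r - 1)⁻¹, fun k => ?_⟩
  norm_cast
  have h : 0 < r - 1 := tsub_pos_of_lt hr1
  rw [inv_mul_eq_div, le_div_iff₀ h]
  refine le_trans ?_ (tsub_le_self (a := r ^ k) (b := 1))
  rw [geom_sum_mul_of_one_le hr1.le]

/-! ### Dyadic blocks of Walsh series -/

/-- The block of the Walsh series `∑ c_j w_j` over `[q 2^k, (q + 1) 2^k)`. -/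
def block (c : ℕ → ℝ) (k q : ℕ) (x : G) : ℝ :=
  ∑ i ∈ Finset.range (2 ^ k), c (2 ^ k * q + i) * walsh (2 ^ k * q + i) x

/-- The block of the Walsh series `∑ c_j w_j` over `[q 2^k, (q + 1) 2^k)` with Fejér weights. -/
def fejerBlock (c : ℕ → ℝ) (k q : ℕ) (x : G) : ℝ :=
  ∑ i ∈ Finset.range (2 ^ k),
    (2 ^ k - i : ℝ) * (c (2 ^ k * q + i) * walsh (2 ^ k * q + i) x)

theorem continuous_block (c : ℕ → ℝ) (k q : ℕ) : Continuous (block c k q) :=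
  continuous_finsetSum _ fun _ _ => continuous_const.mul (continuous_walsh _)

theorem continuous_fejerBlock (c : ℕ → ℝ) (k q : ℕ) : Continuous (fejerBlock c k q) :=
  continuous_finsetSum _ fun _ _ =>
    continuous_const.mul (continuous_const.mul (continuous_walsh _))

theorem block_add_e (c : ℕ → ℝ) (k q : ℕ) (x : G) :
    block c k q (x + e k) = (if q.testBit 0 then -1 else 1) * block c k q x := by
  rw [block, block, Finset.mul_sum]
  refine Finset.sum_congr rfl fun i hi => ?_
  rw [walsh_add_e, Nat.testBit_two_pow_mul_add q (Finset.mem_range.1 hi)]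
  simp only [lt_irrefl, if_false, Nat.sub_self]
  ring

theorem block_succ (c : ℕ → ℝ) (k q : ℕ) (x : G) :
    block c (k + 1) q x = block c k (2 * q) x + block c k (2 * q + 1) x := by
  rw [block, pow_succ, mul_two, Finset.sum_range_add, block, block]
  congr 1
  · refine Finset.sum_congr rfl fun i _ => ?_
    rw [show (2 ^ k + 2 ^ k) * q + i = 2 ^ k * (2 * q) + i by ring]
  · refine Finset.sum_congr rfl fun i _ => ?_
    rw [show (2 ^ k + 2 ^ k) * q + (2 ^ k + i) = 2 ^ k * (2 * q + 1) + i by ring]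

theorem exists_block_eq (c : ℕ → ℝ) (k q : ℕ) :
    ∃ ε : ℝ, (ε = 1 ∨ ε = -1) ∧ ∀ x, block c k q x =
      1 / 2 * (block c (k + 1) (q / 2) x + ε * block c (k + 1) (q / 2) (x + e k)) := by
  obtain h | h := Nat.mod_two_eq_zero_or_one q
  · refine ⟨1, Or.inl rfl, fun x => ?_⟩
    rw [block_succ, block_succ, block_add_e, block_add_e,
      show 2 * (q / 2) = q by omega]
    simp only [Nat.testBit_zero, h, Nat.succ_mod_two_eq_one_iff.2 h]
    norm_num
    ring
  · refine ⟨-1, Or.inr rfl, fun x => ?_⟩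
    rw [block_succ, block_succ, block_add_e, block_add_e,
      show 2 * (q / 2) + 1 = q by omega]
    simp only [Nat.testBit_zero, h, Nat.mul_mod_right]
    norm_num
    ring

theorem two_pow_sub_eq (k i : ℕ) :
    (2 ^ k - (i % 2 ^ k : ℕ) : ℝ) =
      1 + ∑ t ∈ Finset.range k, 2 ^ t * (1 / 2 * (1 + if i.testBit t then -1 else 1)) := by
  induction k with
  | zero => simp [Nat.mod_one]
  | succ k ih =>
    rw [Finset.sum_range_succ, ← add_assoc, ← ih, Nat.mod_pow_succ,
      Nat.testBit_eq_decide_div_mod_eq]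
    obtain h | h := Nat.mod_two_eq_zero_or_one (i / 2 ^ k) <;>
      · simp only [h]
        push_cast
        norm_num
        ring

theorem fejerBlock_eq (c : ℕ → ℝ) (k q : ℕ) (x : G) :
    fejerBlock c k q x = block c k q x +
      ∑ t ∈ Finset.range k, 2 ^ t * (1 / 2 * (block c k q x + 1 * block c k q (x + e t))) := by
  simp only [fejerBlock, block, one_mul, ← Finset.sum_add_distrib, Finset.mul_sum]
  rw [Finset.sum_comm, ← Finset.sum_add_distrib]
  refine Finset.sum_congr rfl fun i hi => ?_
  have hik := Finset.mem_range.1 hi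
  have h := two_pow_sub_eq k i
  rw [Nat.mod_eq_of_lt hik] at h
  rw [h, add_mul, one_mul, Finset.sum_mul]
  congr 1
  refine Finset.sum_congr rfl fun t ht => ?_
  rw [walsh_add_e, Nat.testBit_two_pow_mul_add q hik, if_pos (Finset.mem_range.1 ht)]
  ring

theorem powInt_block_le {p : ℝ} (hp : 0 < p) (hp1 : p ≤ 1) (c : ℕ → ℝ) (N : ℕ) (s : ℕ) :
    ∀ k q, k + s = N → q < 2 ^ s →
      powInt p (block c k q) ≤ ((2 : ℝ≥0∞) ^ (1 - p)) ^ s * powInt p (block c N 0) := by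
  induction s with
  | zero =>
    intro k q hk hq
    obtain rfl : q = 0 := by simpa using hq
    obtain rfl : k = N := hk
    simp
  | succ s ih =>
    intro k q hk hq
    obtain ⟨ε, hε, h⟩ := exists_block_eq c k q
    rw [show block c k q = _ from funext h, pow_succ', mul_assoc]
    refine (powInt_half_le hp hp1 (continuous_block _ _ _) _ hε).trans ?_
    gcongr
    exact ih _ _ (by omega) (by rw [pow_succ] at hq; omega)

theorem exists_powInt_fejerBlock_le {p : ℝ} (hp : 0 < p) (hp1 : p ≤ 1) :
    ∃ C : ℝ≥0, ∀ (c : ℕ → ℝ) (k q : ℕ),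
      powInt p (fejerBlock c k q) ≤ C * ((2 : ℝ≥0∞) ^ p) ^ k * powInt p (block c k q) := by
  have ha : 1 < (2 : ℝ≥0∞) ^ p := ENNReal.one_lt_rpow one_lt_two hp
  obtain ⟨C, hC⟩ := exists_sum_pow_le ha (ENNReal.rpow_ne_top_of_nonneg hp.le ofNat_ne_top)
  refine ⟨1 + C * 2 ^ (1 - p), fun c k q => ?_⟩
  have hb := continuous_block c k q
  have hbt (t : ℕ) :
      Continuous fun x => 1 / 2 * (block c k q x + 1 * block c k q (x + e t)) :=
    continuous_const.mul
      (hb.add (continuous_const.mul (hb.comp (continuous_add_const (e t)))))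
  rw [show fejerBlock c k q = _ from funext (fejerBlock_eq c k q)]
  refine (powInt_add_le hp hp1 hb _).trans ?_
  have h1 : powInt p (fun x => ∑ t ∈ Finset.range k,
      2 ^ t * (1 / 2 * (block c k q x + 1 * block c k q (x + e t)))) ≤
      ∑ t ∈ Finset.range k, ((2 : ℝ≥0∞) ^ p) ^ t * (2 ^ (1 - p) * powInt p (block c k q)) := by
    refine (powInt_sum_le hp hp1 _
      (fun t x => 2 ^ t * (1 / 2 * (block c k q x + 1 * block c k q (x + e t)))) fun t => continuous_const.mul (hbt t)).trans ?_
    refine Finset.sum_le_sum fun t _ => ?_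
    rw [powInt_const_mul hp _ (hbt t)]
    gcongr
    · exact enorm_rpow_le_of_le_two_pow hp (by positivity) le_rfl
    · exact powInt_half_le hp hp1 hb _ (Or.inl rfl)
  have h2 : ((1 + C * 2 ^ (1 - p) : ℝ≥0) : ℝ≥0∞) = 1 + C * 2 ^ (1 - p) := by
    rw [ENNReal.coe_add, ENNReal.coe_mul, ENNReal.coe_rpow_of_nonneg _ (by linarith)]
    rfl
  rw [h2, add_mul, add_mul, one_mul]
  gcongr
  · exact le_mul_of_one_le_left' (one_le_pow₀ ha.le)
  · rw [← Finset.sum_mul] at h1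
    refine h1.trans ((mul_le_mul_left (hC k) _).trans_eq ?_)
    ring

/-! ### Fejér sums -/

/-- The part of the Fejér sum `∑_{j < n} (n - j) c_j w_j` coming from the indices below the
integer obtained from `n` by erasing its `k` lowest binary digits. -/
def fejerTrunc (c : ℕ → ℝ) (n k : ℕ) (x : G) : ℝ :=
  ∑ j ∈ Finset.range (2 ^ k * (n / 2 ^ k)), (n - j : ℝ) * (c j * walsh j x)

theorem fejerTrunc_eq (c : ℕ → ℝ) (n k : ℕ) :
    fejerTrunc c n k = fejerTrunc c n (k + 1) ∨
    ∀ x, fejerTrunc c n k x = fejerTrunc c n (k + 1) x +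
      ((n % 2 ^ k : ℕ) * block c k (n / 2 ^ k - 1) x + fejerBlock c k (n / 2 ^ k - 1) x) := by
  have hdiv : n / 2 ^ (k + 1) = n / 2 ^ k / 2 := by rw [pow_succ, Nat.div_div_eq_div_mul]
  have hmod := Nat.div_add_mod n (2 ^ k)
  unfold fejerTrunc
  rw [hdiv]
  generalize n / 2 ^ k = q at *
  obtain ⟨u, rfl | rfl⟩ := Nat.even_or_odd' q
  · left
    rw [show 2 ^ (k + 1) * (2 * u / 2) = 2 ^ k * (2 * u) by
      rw [Nat.mul_div_cancel_left _ two_pos]; ring]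
  · right
    intro x
    rw [show 2 ^ (k + 1) * ((2 * u + 1) / 2) = 2 ^ k * (2 * u) by
      rw [show (2 * u + 1) / 2 = u by omega]; ring, Nat.add_sub_cancel, mul_add, mul_one,
      Finset.sum_range_add]
    congr 1
    rw [block, fejerBlock, Finset.mul_sum, ← Finset.sum_add_distrib]
    refine Finset.sum_congr rfl fun i _ => ?_
    have h : (n : ℝ) = 2 ^ k * (2 * u + 1) + (n % 2 ^ k : ℕ) := by exact_mod_cast hmod.symm
    nth_rewrite 1 [h]
    push_cast
    ring

theorem continuous_fejerTrunc (c : ℕ → ℝ) (n k : ℕ) : Continuous (fejerTrunc c n k) :=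
  continuous_finsetSum _ fun _ _ =>
    continuous_const.mul (continuous_const.mul (continuous_walsh _))

theorem exists_powInt_fejerTrunc_le {p : ℝ} (hp : 0 < p) (hp1 : p ≤ 1) :
    ∃ C : ℝ≥0, ∀ (c : ℕ → ℝ) (n N : ℕ), n < 2 ^ N → ∀ s k, k + s = N →
      powInt p (fejerTrunc c n k) ≤ ∑ i ∈ Finset.range s,
        C * ((2 : ℝ≥0∞) ^ p) ^ N * ((2 : ℝ≥0∞) ^ (1 - 2 * p)) ^ (i + 1) *
          powInt p (block c N 0) := by
  obtain ⟨C, hC⟩ := exists_powInt_fejerBlock_le hp hp1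
  refine ⟨1 + C, fun c n N hn s => ?_⟩
  induction s with
  | zero =>
    intro k hk
    obtain rfl : k = N := hk
    have h : fejerTrunc c n k = fun _ => 0 := by
      ext x
      simp [fejerTrunc, Nat.div_eq_of_lt hn]
    rw [h]
    simp [powInt, hp]
  | succ s ih =>
    intro k hk
    have ih' := ih (k + 1) (by omega)
    rw [Finset.sum_range_succ]
    obtain h | h := fejerTrunc_eq c n k
    · rw [h]
      exact ih'.trans le_self_add
    · rw [show fejerTrunc c n k = _ from funext h]
      refine (powInt_add_le hp hp1 (continuous_fejerTrunc c n (k + 1)) _).trans ?_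
      gcongr
      set q := n / 2 ^ k - 1
      have hb := continuous_block c k q
      have hq : q < 2 ^ (s + 1) := by
        have : n / 2 ^ k < 2 ^ (s + 1) := by
          rw [Nat.div_lt_iff_lt_mul (by positivity), ← pow_add, add_comm, hk]
          exact hn
        exact (Nat.sub_le _ _).trans_lt this
      have h1 : powInt p (fun x => (n % 2 ^ k : ℕ) * block c k q x + fejerBlock c k q x) ≤
          (1 + C) * ((2 : ℝ≥0∞) ^ p) ^ k * powInt p (block c k q) := by
        refine (powInt_add_le hp hp1 (f := fun x => ((n % 2 ^ k : ℕ) : ℝ) * block c k q x)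
          (continuous_const.mul hb) _).trans ?_
        rw [powInt_const_mul hp _ hb, add_mul, add_mul, one_mul]
        gcongr
        · refine enorm_rpow_le_of_le_two_pow hp (Nat.cast_nonneg _) ?_
          exact_mod_cast (Nat.mod_lt n (by positivity)).le
        · exact hC c k q
      refine h1.trans ?_
      have h2 : (2 : ℝ≥0∞) ^ (1 - p) = 2 ^ p * 2 ^ (1 - 2 * p) := by
        rw [← ENNReal.rpow_add _ _ two_ne_zero ofNat_ne_top]
        congr 1
        ring
      refine (mul_le_mul_right (powInt_block_le hp hp1 c N (s + 1) k q hk hq) _).trans_eq ?_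
      rw [h2, ← hk, ENNReal.coe_add, ENNReal.coe_one]
      ring

theorem sum_Icc_sum_range (g : ℕ → ℝ) (n : ℕ) :
    ∑ k ∈ Finset.Icc 1 n, ∑ j ∈ Finset.range k, g j = ∑ j ∈ Finset.range n, (n - j : ℝ) * g j := by
  induction n with
  | zero => simp
  | succ n ih =>
    rw [Finset.sum_Icc_succ_top (by omega), ih, Finset.sum_range_succ, Finset.sum_range_succ,
      ← add_assoc, ← Finset.sum_add_distrib]
    congr 1
    · refine Finset.sum_congr rfl fun j _ => ?_
      push_cast
      ring
    · push_cast
      ring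

theorem fejer_mean_eq (F : ℕ → G → ℝ) (n : ℕ) (x : G) :
    σ F n x = ∑ j ∈ Finset.range n, (1 / n * ((n - j : ℝ) * mcoeff F j)) * walsh j x := by
  simp only [σ, S, sum_Icc_sum_range, Finset.mul_sum, mul_assoc]

theorem fejer_mean_eq_fejerTrunc (F : ℕ → G → ℝ) (n : ℕ) (x : G) :
    σ F n x = 1 / n * fejerTrunc (mcoeff F) n (lo n) x := by
  have h : 2 ^ lo n * (n / 2 ^ lo n) = n := Nat.mul_div_cancel' pow_padicValNat_dvd
  simp only [σ, S, sum_Icc_sum_range, fejerTrunc, h]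

theorem funMart_fejer_mean (F : ℕ → G → ℝ) (n m : ℕ) (x : G) :
    funMart (σ F n) m x = ∑ j ∈ Finset.range (min (2 ^ m) n),
      (1 / n * ((n - j : ℝ) * mcoeff F j)) * walsh j x := by
  rw [funMart, Sf, show σ F n = _ from funext (fejer_mean_eq F n)]
  simp only [fcoeff_sum_walsh, Finset.mem_range]
  rw [← Finset.sum_subset (Finset.range_mono (min_le_left (2 ^ m) n))]
  · refine Finset.sum_congr rfl fun j hj => ?_
    rw [if_pos (lt_min_iff.1 (Finset.mem_range.1 hj)).2]
  · intro j h1 h2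
    rw [Finset.mem_range] at h1 h2
    rw [if_neg (by rw [lt_min_iff] at h2; tauto), zero_mul]

theorem funMart_fejer_mean_of_le {F : ℕ → G → ℝ} (hF : IsDyadicMartingale F) {n m : ℕ}
    (h : 2 ^ m ≤ n) (x : G) :
    funMart (σ F n) m x =
      (1 - 2 ^ m / n) * F m x + 1 / n * fejerBlock (mcoeff F) m 0 x := by
  have hn : (n : ℝ) ≠ 0 := by
    have : 0 < 2 ^ m := by positivity
    exact_mod_cast (by omega : n ≠ 0)
  rw [funMart_fejer_mean, min_eq_left h, hF.eq_sum_mcoeff, fejerBlock, Finset.mul_sum,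
    Finset.mul_sum, ← Finset.sum_add_distrib]
  refine Finset.sum_congr rfl fun j _ => ?_
  simp only [mul_zero, zero_add]
  field_simp
  ring

theorem block_mcoeff {F : ℕ → G → ℝ} (hF : IsDyadicMartingale F) (m : ℕ) :
    block (mcoeff F) m 0 = F m := by
  ext x
  simp only [block, hF.eq_sum_mcoeff m x, mul_zero, zero_add]

theorem iSup_funMart_fejer_mean_le {p : ℝ} (hp : 0 < p) (hp1 : p ≤ 1) {F : ℕ → G → ℝ}
    (hF : IsDyadicMartingale F) {n : ℕ} (hn : n ≠ 0) (x : G) :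
    (⨆ m, ‖funMart (σ F n) m x‖ₑ) ^ p ≤ ‖1 / n * fejerTrunc (mcoeff F) n (lo n) x‖ₑ ^ p +
      ((⨆ m, ‖F m x‖ₑ) ^ p +
        ∑ m ∈ Finset.range (hi n + 1), ‖1 / n * fejerBlock (mcoeff F) m 0 x‖ₑ ^ p) := by
  rw [← ENNReal.le_rpow_inv_iff hp]
  refine iSup_le fun m => ?_
  rw [ENNReal.le_rpow_inv_iff hp]
  rcases le_or_gt (2 ^ m) n with h | h
  · refine le_trans ?_ le_add_self
    rw [funMart_fejer_mean_of_le hF h]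
    refine (enorm_add_rpow_le hp hp1 _ _).trans (add_le_add ?_ ?_)
    · refine ENNReal.rpow_le_rpow (le_trans ?_ (le_iSup (fun m => ‖F m x‖ₑ) m)) hp.le
      rw [enorm_mul]
      refine mul_le_of_le_one_left' ?_
      have hn0 : (0 : ℝ) < n := by exact_mod_cast Nat.pos_of_ne_zero hn
      have h1 : (2 : ℝ) ^ m / n ≤ 1 := (div_le_one hn0).2 (by exact_mod_cast h)
      have h2 : (0 : ℝ) ≤ 2 ^ m / n := by positivity
      rw [Real.enorm_of_nonneg (by linarith)]
      exact ENNReal.ofReal_le_one.2 (by linarith)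
    · have hm : m ∈ Finset.range (hi n + 1) :=
        Finset.mem_range.2 (Nat.lt_succ_of_le (Nat.le_log_of_pow_le one_lt_two h))
      exact Finset.single_le_sum
        (f := fun m => ‖1 / n * fejerBlock (mcoeff F) m 0 x‖ₑ ^ p) (fun _ _ => zero_le) hm
  · refine le_trans (le_of_eq ?_) le_self_add
    rw [funMart_fejer_mean, min_eq_right h.le, ← fejer_mean_eq, fejer_mean_eq_fejerTrunc]

theorem exists_lintegral_maximal_fejer_mean_le {p : ℝ} (hp : 0 < p) (hp2 : p < 1 / 2) :
    ∃ C : ℝ≥0, 0 < C ∧ ∀ F : ℕ → G → ℝ, IsDyadicMartingale F → ∀ n : ℕ, 1 ≤ n →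
      ∫⁻ x, (⨆ m, ‖funMart (σ F n) m x‖ₑ) ^ p ∂μG ≤
        C * ((2 : ℝ≥0∞) ^ (1 - 2 * p)) ^ dd n * ∫⁻ x, (⨆ m, ‖F m x‖ₑ) ^ p ∂μG := by
  have hp1 : p ≤ 1 := by linarith
  obtain ⟨B, hB⟩ := exists_powInt_fejerBlock_le hp hp1
  obtain ⟨T, hT⟩ := exists_powInt_fejerTrunc_le hp hp1
  have ha : 1 < (2 : ℝ≥0∞) ^ p := ENNReal.one_lt_rpow one_lt_two hp
  have ha' : (2 : ℝ≥0∞) ^ p ≠ ⊤ := ENNReal.rpow_ne_top_of_nonneg hp.le ofNat_ne_top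
  have hr : 1 < (2 : ℝ≥0∞) ^ (1 - 2 * p) := ENNReal.one_lt_rpow one_lt_two (by linarith)
  have hr' : (2 : ℝ≥0∞) ^ (1 - 2 * p) ≠ ⊤ :=
    ENNReal.rpow_ne_top_of_nonneg (by linarith) ofNat_ne_top
  obtain ⟨Ca, hCa⟩ := exists_sum_pow_le ha ha'
  obtain ⟨Cr, hCr⟩ := exists_sum_pow_le hr hr'
  generalize (2 : ℝ≥0∞) ^ (1 - 2 * p) = r at *
  generalize ha2 : (2 : ℝ≥0∞) ^ p = a at *
  lift a to ℝ≥0 using ha'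
  lift r to ℝ≥0 using hr'
  refine ⟨T * a * Cr * r ^ 2 + 1 + B * Ca * a, by positivity, fun F hF n hn => ?_⟩
  have hn0 : n ≠ 0 := by omega
  set H := ∫⁻ x, (⨆ m, ‖F m x‖ₑ) ^ p ∂μG with hH
  set κ := ‖(1 / n : ℝ)‖ₑ ^ p with hκ
  have hFH (m : ℕ) : powInt p (F m) ≤ H :=
    lintegral_mono fun x => ENNReal.rpow_le_rpow (le_iSup (fun m => ‖F m x‖ₑ) m) hp.le
  have hκa : κ * (a : ℝ≥0∞) ^ hi n ≤ 1 := by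
    have h1 : (a : ℝ≥0∞) ^ hi n = (2 ^ hi n : ℝ≥0∞) ^ p := by
      rw [← ha2, ← ENNReal.rpow_natCast, ← ENNReal.rpow_natCast, ← ENNReal.rpow_mul,
        ← ENNReal.rpow_mul, mul_comm]
    have h2 : (2 ^ hi n : ℝ≥0∞) ≤ n := by exact_mod_cast Nat.pow_log_le_self 2 hn0
    rw [h1, hκ, ← ENNReal.mul_rpow_of_nonneg _ _ hp.le]
    refine ENNReal.rpow_le_one ?_ hp.le
    rw [Real.enorm_of_nonneg (by positivity), one_div,
      ENNReal.ofReal_inv_of_pos (by positivity), ENNReal.ofReal_natCast]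
    refine (mul_le_mul_right h2 _).trans ?_
    exact ENNReal.inv_mul_le_one _
  have hloh : lo n ≤ hi n :=
    Nat.le_log_of_pow_le one_lt_two (Nat.le_of_dvd (by omega) pow_padicValNat_dvd)
  have hnhi : n < 2 ^ (hi n + 1) := Nat.lt_pow_succ_log_self one_lt_two n
  have b1 : powInt p (fun x => 1 / n * fejerTrunc (mcoeff F) n (lo n) x) ≤
      T * a * Cr * r ^ 2 * (r : ℝ≥0∞) ^ dd n * H := by
    rw [powInt_const_mul hp _ (continuous_fejerTrunc _ _ _), ← hκ]
    have h1 := hT (mcoeff F) n (hi n + 1) hnhi (dd n + 1) (lo n) (by rw [dd]; omega)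
    rw [block_mcoeff hF] at h1
    calc _ ≤ κ * ∑ i ∈ Finset.range (dd n + 1),
          (T * (a : ℝ≥0∞) ^ (hi n + 1) * r ^ (i + 1) * H) := by
          refine mul_le_mul_right (h1.trans ?_) _
          gcongr
          exact hFH _
      _ = (κ * a ^ hi n) * (T * a * r * H * ∑ i ∈ Finset.range (dd n + 1), (r : ℝ≥0∞) ^ i) := by
          simp only [Finset.mul_sum]
          refine Finset.sum_congr rfl fun i _ => ?_
          ring
      _ ≤ 1 * (T * a * r * H * (Cr * r ^ (dd n + 1))) := by
          gcongr
          exact hCr _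
      _ = _ := by ring
  have b2 : ∑ m ∈ Finset.range (hi n + 1),
      powInt p (fun x => 1 / n * fejerBlock (mcoeff F) m 0 x) ≤
      B * Ca * a * (r : ℝ≥0∞) ^ dd n * H := by
    calc _ ≤ ∑ m ∈ Finset.range (hi n + 1), κ * (B * (a : ℝ≥0∞) ^ m * H) := by
          refine Finset.sum_le_sum fun m _ => ?_
          rw [powInt_const_mul hp _ (continuous_fejerBlock _ _ _)]
          refine mul_le_mul_right ((hB _ _ _).trans ?_) _
          rw [block_mcoeff hF]
          gcongr
          exact hFH m
      _ = κ * (B * H * ∑ m ∈ Finset.range (hi n + 1), (a : ℝ≥0∞) ^ m) := by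
          simp only [Finset.mul_sum]
          refine Finset.sum_congr rfl fun i _ => ?_
          ring
      _ ≤ κ * (B * H * (Ca * a ^ (hi n + 1))) := by
          gcongr
          exact hCa _
      _ = (κ * a ^ hi n) * (B * Ca * a * 1 * H) := by ring
      _ ≤ 1 * (B * Ca * a * (r : ℝ≥0∞) ^ dd n * H) := by
          gcongr
          exact one_le_pow₀ hr.le
      _ = _ := one_mul _
  have hFm : Measurable fun x => (⨆ m, ‖F m x‖ₑ) ^ p := by
    refine Measurable.pow_const (Measurable.iSup fun m => ?_) p
    rw [← block_mcoeff hF m]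
    exact (continuous_block _ _ _).measurable.enorm
  refine (lintegral_mono fun x => iSup_funMart_fejer_mean_le hp hp1 hF hn0 x).trans ?_
  have m1 : Continuous fun x => (1 / n : ℝ) * fejerTrunc (mcoeff F) n (lo n) x :=
    continuous_const.mul (continuous_fejerTrunc _ _ _)
  have m2 (m : ℕ) : Continuous fun x => (1 / n : ℝ) * fejerBlock (mcoeff F) m 0 x :=
    continuous_const.mul (continuous_fejerBlock _ _ _)
  rw [lintegral_add_left (m1.measurable_enorm_rpow p), lintegral_add_left hFm,
    lintegral_finsetSum _ fun m _ => (m2 m).measurable_enorm_rpow p]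
  have b3 : H ≤ (r : ℝ≥0∞) ^ dd n * H := le_mul_of_one_le_left' (one_le_pow₀ hr.le)
  refine (add_le_add b1 (add_le_add b3 b2)).trans_eq ?_
  push_cast
  ring

/-- `‖σ_n F‖_{H_p} ≤ c_p 2^{d(n)(1/p - 2)} ‖F‖_{H_p}` for `0 < p < 1/2`. -/
theorem fejer_Hp_bound_p (p : ℝ) (hp : 0 < p) (hp2 : p < 1/2) :
    ∃ C : ℝ≥0, 0 < C ∧ ∀ F : ℕ → G → ℝ, MemHp p F → ∀ n : ℕ, 1 ≤ n →
      HpNorm p (funMart (σ F n)) ≤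
        (C : ℝ≥0∞) * (2 : ℝ≥0∞) ^ ((dd n : ℝ) * (1/p - 2)) * HpNorm p F := by
  obtain ⟨C, hC0, hC⟩ := exists_lintegral_maximal_fejer_mean_le hp hp2
  have hp' : 0 ≤ 1 / p := by positivity
  refine ⟨C ^ (1 / p), NNReal.rpow_pos hC0, fun F hF n hn => ?_⟩
  refine (ENNReal.rpow_le_rpow (hC F hF.1 n hn) hp').trans_eq ?_
  rw [ENNReal.mul_rpow_of_nonneg _ _ hp', ENNReal.mul_rpow_of_nonneg _ _ hp',
    ENNReal.coe_rpow_of_nonneg _ hp', ← ENNReal.rpow_natCast, ← ENNReal.rpow_mul,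
    ← ENNReal.rpow_mul, show (1 - 2 * p) * ((dd n : ℝ) * (1 / p)) = dd n * (1 / p - 2) by
      field_simp]
  rfl
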